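/- Let D₈ denote the dihedral group of order 8. For every natural number n, the group homology H_n(D₈; F₂) with trivial coefficients F₂ is an F₂-vector space of dimension n + 1. -/

import Mathlib

open TensorProduct MulOpposite CategoryTheory

section Machinery

variable (k : Type) [CommRing k] (S : Type) [Ring S] [Algebra k S] (P : Set (S × S))

/-- The `k`-submodule of (the restriction of scalars of) an `S`-module `N` generated by all
differences `p.1 • n - p.2 • n` for pairs `p ∈ P` and `n ∈ N`. -/
noncomputable def relSub (N : ModuleCat S) :
    Submodule k ((ModuleCat.restrictScalars (algebraMap k S)).obj N) :=
  Submodule.span k {x | ∃ p ∈ P, ∃ n : N, x = p.1 • n - p.2 • n}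

/-- The "coinvariants"-type additive functor sending an `S`-module `N` to its quotient,
as a `k`-module, by the span of all elements `p.1 • n - p.2 • n` for `p ∈ P`, `n ∈ N`. -/
noncomputable def coinvFunctor : ModuleCat S ⥤ ModuleCat k where
  obj N := ModuleCat.of k (((ModuleCat.restrictScalars (algebraMap k S)).obj N) ⧸ relSub k S P N)
  map {N N'} f := ModuleCat.ofHom <| Submodule.mapQ (relSub k S P N) (relSub k S P N')
      ((ModuleCat.restrictScalars (algebraMap k S)).map f).hom (by
    rw [relSub, Submodule.span_le]
    rintro x ⟨p, hp, n, rfl⟩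
    have : ((ModuleCat.restrictScalars (algebraMap k S)).map f) (p.1 • n - p.2 • n)
        = p.1 • (f n) - p.2 • (f n) := by
      show f (p.1 • n - p.2 • n) = _
      rw [map_sub, f.hom.map_smul, f.hom.map_smul]
    refine (congrArg (· ∈ relSub k S P N') this).mpr ?_
    exact Submodule.subset_span ⟨p, hp, f n, rfl⟩)
  map_id _ := ModuleCat.hom_ext (Submodule.linearMap_qext _ (LinearMap.ext fun _ => rfl))
  map_comp _ _ := ModuleCat.hom_ext (Submodule.linearMap_qext _ (LinearMap.ext fun _ => rfl))

instance : (coinvFunctor k S P).Additive where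
  map_add := ModuleCat.hom_ext (Submodule.linearMap_qext _ (LinearMap.ext fun _ => rfl))

end Machinery

/-- Group homology `H_n(G; k)` with trivial coefficients `k`: the `n`-th left derived functor
(that is, `Tor_n` over the group algebra `MonoidAlgebra k G`) of the coinvariants functor
`N ↦ N / span { g•n - n }`, evaluated at the trivial one-dimensional representation `k`
(made a `MonoidAlgebra k G`-module via the augmentation map). -/
noncomputable def GroupHomology (k : Type) [CommRing k] (G : Type) [Group G] (n : ℕ) :
    ModuleCat k :=
  letI : Module (MonoidAlgebra k G) k :=
    Module.compHom k (MonoidAlgebra.lift k k G 1).toRingHom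
  ((coinvFunctor k (MonoidAlgebra k G)
      {p | ∃ g : G, p = (MonoidAlgebra.single g 1, 1)}).leftDerived n).obj
    (ModuleCat.of (MonoidAlgebra k G) k)

/-!
The group algebra over a ring of characteristic two of a finite dihedral group of order divisible
by four, generated by two reflections `s` and `t`, has a free resolution of the trivial module that
is the total complex of a first quadrant double complex with one copy of the group algebra at every
position `(i, j)`. The differentials are right multiplications: the horizontal ones by `x = s + 1`
below the diagonal and by a subgroup sum `x'` elsewhere, the vertical ones by `y = t + 1` above the
diagonal and by a subgroup sum `y'` elsewhere. All squares of the double complex have both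
composites equal to the norm element, so they commute, which in characteristic two is
anticommutation.

Exactness is checked along each antidiagonal, where the equation `d g = f` can be solved from the
middle outwards: the periodicity of `x` and `y` propagates a solution along both arms, and the only
condition in the middle involves the norm element. Every entry of the differentials has augmentation
zero, so the resolution is minimal and the homology in degree `n` is free on the `n + 1` points of
the antidiagonal.
-/

section DihedralQuadruple

variable {R : Type*} [Ring R] {x y x' y' : R}

/-- Ring elements `x`, `y`, `x'`, `y'` with the multiplicative relations and exactness properties
of `s + 1`, `t + 1`, `∑ g ∈ K, g`, `∑ g ∈ H, g` in a group algebra of characteristic two. Here the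
involutions `s` and `t` generate the finite group, and `K ∋ s`, `H ∋ t` are subgroups of index two
with `t ∉ K` and `s ∉ H`. The common value of the mixed products, normalised to `x' * y`, then
plays the role of the norm element. -/
structure IsDihedralQuadruple (x y x' y' : R) : Prop where
  x_mul_x : x * x = 0
  y_mul_y : y * y = 0
  x_mul_x' : x * x' = 0
  x'_mul_x : x' * x = 0
  y_mul_y' : y * y' = 0
  y'_mul_y : y' * y = 0
  x_mul_y' : x * y' = x' * y
  y'_mul_x : y' * x = x' * y
  y_mul_x' : y * x' = x' * y
  exists_mul_x_eq {r : R} : r * x = 0 → ∃ u, u * x = r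
  exists_mul_y_eq {r : R} : r * y = 0 → ∃ u, u * y = r
  exists_mul_norm_eq {r : R} : r * x = 0 → r * y = 0 → ∃ c, c * (x' * y) = r
  exists_mul_x_add_mul_y_eq {r : R} : r * (x' * y) = 0 → ∃ u w, u * x + w * y = r

namespace IsDihedralQuadruple

lemma symm (h : IsDihedralQuadruple x y x' y') : IsDihedralQuadruple y x y' x' where
  x_mul_x := h.y_mul_y
  y_mul_y := h.x_mul_x
  x_mul_x' := h.y_mul_y'
  x'_mul_x := h.y'_mul_y
  y_mul_y' := h.x_mul_x'
  y'_mul_y := h.x'_mul_x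
  x_mul_y' := h.y_mul_x'.trans h.y'_mul_x.symm
  y'_mul_x := h.y'_mul_x.symm
  y_mul_x' := h.x_mul_y'.trans h.y'_mul_x.symm
  exists_mul_x_eq := h.exists_mul_y_eq
  exists_mul_y_eq := h.exists_mul_x_eq
  exists_mul_norm_eq hy hx := h.y'_mul_x ▸ h.exists_mul_norm_eq hx hy
  exists_mul_x_add_mul_y_eq hr := by
    obtain ⟨u, w, huw⟩ := h.exists_mul_x_add_mul_y_eq (h.y'_mul_x ▸ hr)
    exact ⟨w, u, by rw [add_comm, huw]⟩

lemma x'_mul_x' (h : IsDihedralQuadruple x y x' y') : x' * x' = 0 := by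
  obtain ⟨u, hu⟩ := h.exists_mul_x_eq h.x'_mul_x
  calc x' * x' = u * (x * x') := by rw [← mul_assoc, hu]
    _ = 0 := by rw [h.x_mul_x', mul_zero]

lemma y'_mul_y' (h : IsDihedralQuadruple x y x' y') : y' * y' = 0 :=
  h.symm.x'_mul_x'

end IsDihedralQuadruple

end DihedralQuadruple

section DihedralComplex

variable {R : Type*} [Ring R]

/-- The coefficient of the horizontal differential `(i, j) ⟶ (i - 1, j)` of the dihedral double
complex, at `p = (i, j)`: it is `x` below the diagonal and `x'` on and above it. -/
def horizontalCoeff (x x' : R) (p : ℕ × ℕ) : R := if p.1 ≤ p.2 then x' else x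

/-- The coefficient of the vertical differential `(i, j) ⟶ (i, j - 1)` of the dihedral double
complex, at `p = (i, j)`: it is `y` above the diagonal and `y'` on and below it. -/
def verticalCoeff (y y' : R) (p : ℕ × ℕ) : R := if p.2 ≤ p.1 then y' else y

/-- The differential of the dihedral double complex, on the product of all the entries `R` of the
first quadrant. -/
def quadrantDifferential (x y x' y' : R) : (ℕ × ℕ → R) →ₗ[R] (ℕ × ℕ → R) where
  toFun f p := f (p.1 + 1, p.2) * horizontalCoeff x x' (p.1 + 1, p.2) +
    f (p.1, p.2 + 1) * verticalCoeff y y' (p.1, p.2 + 1)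
  map_add' f g := by
    ext p
    simp only [Pi.add_apply, add_mul]
    abel
  map_smul' r f := by
    ext p
    simp only [Pi.smul_apply, smul_eq_mul, RingHom.id_apply, mul_add, mul_assoc]

variable {x y x' y' : R}

lemma quadrantDifferential_apply (f : ℕ × ℕ → R) (i j : ℕ) :
    quadrantDifferential x y x' y' f (i, j) =
      f (i + 1, j) * (if i + 1 ≤ j then x' else x) +
        f (i, j + 1) * (if j + 1 ≤ i then y' else y) := rfl

lemma quadrantDifferential_of_lt {i j : ℕ} (hij : j < i) (f : ℕ × ℕ → R) :
    quadrantDifferential x y x' y' f (i, j) = f (i + 1, j) * x + f (i, j + 1) * y' := by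
  rw [quadrantDifferential_apply, if_neg (by lia), if_pos (by lia)]

lemma quadrantDifferential_of_gt {i j : ℕ} (hij : i < j) (f : ℕ × ℕ → R) :
    quadrantDifferential x y x' y' f (i, j) = f (i, j + 1) * y + f (i + 1, j) * x' := by
  rw [quadrantDifferential_apply, if_pos (by lia), if_neg (by lia), add_comm]

lemma quadrantDifferential_diag (f : ℕ × ℕ → R) (i : ℕ) :
    quadrantDifferential x y x' y' f (i, i) = f (i + 1, i) * x + f (i, i + 1) * y := by
  rw [quadrantDifferential_apply, if_neg (by lia), if_neg (by lia)]

namespace IsDihedralQuadruple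

lemma horizontalCoeff_mul_horizontalCoeff (h : IsDihedralQuadruple x y x' y') (i j : ℕ) :
    horizontalCoeff x x' (i + 2, j) * horizontalCoeff x x' (i + 1, j) = 0 := by
  unfold horizontalCoeff
  split_ifs
  · exact h.x'_mul_x'
  · lia
  · exact h.x_mul_x'
  · exact h.x_mul_x

lemma verticalCoeff_mul_verticalCoeff (h : IsDihedralQuadruple x y x' y') (i j : ℕ) :
    verticalCoeff y y' (i, j + 2) * verticalCoeff y y' (i, j + 1) = 0 :=
  h.symm.horizontalCoeff_mul_horizontalCoeff j i

lemma horizontalCoeff_mul_verticalCoeff (h : IsDihedralQuadruple x y x' y') (i j : ℕ) :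
    horizontalCoeff x x' (i + 1, j + 1) * verticalCoeff y y' (i, j + 1) = x' * y := by
  unfold horizontalCoeff verticalCoeff
  split_ifs
  · lia
  · rfl
  · exact h.x_mul_y'
  · lia

lemma verticalCoeff_mul_horizontalCoeff (h : IsDihedralQuadruple x y x' y') (i j : ℕ) :
    verticalCoeff y y' (i + 1, j + 1) * horizontalCoeff x x' (i + 1, j) = x' * y :=
  (h.symm.horizontalCoeff_mul_verticalCoeff j i).trans h.y'_mul_x

variable [CharP R 2]

lemma quadrantDifferential_quadrantDifferential (h : IsDihedralQuadruple x y x' y')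
    (f : ℕ × ℕ → R) :
    quadrantDifferential x y x' y' (quadrantDifferential x y x' y' f) = 0 := by
  ext ⟨i, j⟩
  simp only [quadrantDifferential, LinearMap.coe_mk, AddHom.coe_mk, add_mul, mul_assoc,
    add_assoc, Nat.reduceAdd, Pi.zero_apply, h.horizontalCoeff_mul_horizontalCoeff,
    h.verticalCoeff_mul_verticalCoeff, h.horizontalCoeff_mul_verticalCoeff,
    h.verticalCoeff_mul_horizontalCoeff, mul_zero, zero_add, add_zero, CharTwo.add_self_eq_zero]

lemma exists_recurrence_solution (h : IsDihedralQuadruple x y x' y') (ρ : ℕ → R) (m : ℕ) (a : R)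
    (hρ : ∀ j, j + 1 < m → ρ j * x + ρ (j + 1) * y' = 0)
    (ha : ∀ j, j + 1 = m → (ρ j + a * y') * x = 0) :
    ∃ τ : ℕ → R, τ m = a ∧ ∀ j < m, τ j * x + τ (j + 1) * y' = ρ j := by
  induction m generalizing a with
  | zero => exact ⟨fun _ ↦ a, rfl, fun j hj ↦ absurd hj j.not_lt_zero⟩
  | succ m ih =>
    obtain ⟨b, hb⟩ := h.exists_mul_x_eq (ha m rfl)
    have hb_start : ∀ j, j + 1 = m → (ρ j + b * y') * x = 0 := by
      rintro j rfl
      calc (ρ j + b * y') * x = ρ j * x + b * x * y' := by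
            rw [add_mul, mul_assoc, mul_assoc, h.y'_mul_x, h.x_mul_y']
        _ = ρ j * x + ρ (j + 1) * y' + a * (y' * y') := by
            rw [hb, add_mul, mul_assoc, add_assoc]
        _ = 0 := by rw [hρ j (by lia), h.y'_mul_y', mul_zero, add_zero]
    obtain ⟨τ, hτm, hτ⟩ := ih b (fun j hj ↦ hρ j (by lia)) hb_start
    refine ⟨Function.update τ (m + 1) a, Function.update_self .., fun j hj ↦ ?_⟩
    rw [Function.update_of_ne hj.ne]
    rcases (Nat.lt_succ_iff.1 hj).lt_or_eq with hjm | rfl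
    · rw [Function.update_of_ne (by lia), hτ j hjm]
    · rw [Function.update_self, hτm, hb, add_assoc, CharTwo.add_self_eq_zero, add_zero]

/-- Away from the middle of the antidiagonal of degree `N`, the equation `d g = f` splits into one
recurrence along each arm; `a` and `b` are the values of `g` at the inner ends of the arms. -/
lemma exists_quadrantDifferential_eq_of_middle (h : IsDihedralQuadruple x y x' y')
    {f : ℕ × ℕ → R} {N m : ℕ} (hmN : N ≤ 2 * m) (hNm : 2 * m ≤ N + 1)
    (hf : ∀ i j, i + j + 1 = N → quadrantDifferential x y x' y' f (i, j) = 0) (a b : R)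
    (hab : N + 1 = 2 * m → a = b) (hmid : N = 2 * m → a * x + b * y = f (m, m))
    (ha : ∀ j, j + 1 = m → (f (N - j, j) + a * y') * x = 0)
    (hb : ∀ i, i + 1 = m → (f (i, N - i) + b * x') * y = 0) :
    ∃ g : ℕ × ℕ → R, ∀ i j, i + j = N → quadrantDifferential x y x' y' g (i, j) = f (i, j) := by
  have right_cycle (j : ℕ) (hj : j + 1 < m) :
      f (N - j, j) * x + f (N - (j + 1), j + 1) * y' = 0 := by
    have := hf (N - (j + 1)) j (by lia)
    rwa [quadrantDifferential_of_lt (by lia), show N - (j + 1) + 1 = N - j by lia] at this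
  have left_cycle (i : ℕ) (hi : i + 1 < m) :
      f (i, N - i) * y + f (i + 1, N - (i + 1)) * x' = 0 := by
    have := hf i (N - (i + 1)) (by lia)
    rwa [quadrantDifferential_of_gt (by lia), show N - (i + 1) + 1 = N - i by lia] at this
  obtain ⟨τ, hτm, hτ⟩ := h.exists_recurrence_solution (fun j ↦ f (N - j, j)) m a right_cycle ha
  obtain ⟨σ, hσm, hσ⟩ := h.symm.exists_recurrence_solution (fun i ↦ f (i, N - i)) m b left_cycle hb
  let g : ℕ × ℕ → R := fun p ↦ if p.2 ≤ p.1 then τ p.2 else σ p.1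
  have g_right (i j : ℕ) (hij : i + j = N + 1) (hj : j ≤ m) : g (i, j) = τ j := if_pos (by lia)
  have g_left (i j : ℕ) (hij : i + j = N + 1) (hi : i ≤ m) : g (i, j) = σ i := by
    by_cases hji : j ≤ i
    · obtain ⟨rfl, rfl⟩ : i = m ∧ j = m := by lia
      rw [g_right _ _ hij hi, hτm, hσm, hab (by lia)]
    · exact if_neg hji
  refine ⟨g, fun i j hij ↦ ?_⟩
  rcases lt_trichotomy i j with hlt | rfl | hlt
  · rw [quadrantDifferential_of_gt hlt, g_left i (j + 1) (by lia) (by lia),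
      g_left (i + 1) j (by lia) (by lia), hσ i (by lia), show N - i = j by lia]
  · obtain rfl : i = m := by lia
    rw [quadrantDifferential_diag, g_right (i + 1) i (by lia) le_rfl,
      g_left i (i + 1) (by lia) le_rfl, hτm, hσm, hmid (by lia)]
  · rw [quadrantDifferential_of_lt hlt, g_right (i + 1) j (by lia) (by lia),
      g_right i (j + 1) (by lia) (by lia), hτ j (by lia), show N - j = i by lia]

lemma exists_quadrantDifferential_eq_of_odd (h : IsDihedralQuadruple x y x' y')
    {f : ℕ × ℕ → R} {m : ℕ}
    (hf : ∀ i j, i + j = 2 * m → quadrantDifferential x y x' y' f (i, j) = 0) :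
    ∃ g : ℕ × ℕ → R, ∀ i j, i + j = 2 * m + 1 →
      quadrantDifferential x y x' y' g (i, j) = f (i, j) := by
  have hm : f (m + 1, m) * x = f (m, m + 1) * y := by
    rw [← CharTwo.add_eq_zero, ← quadrantDifferential_diag (x' := x') (y' := y')]
    exact hf m m (by lia)
  obtain ⟨c, hc⟩ : ∃ c, c * (x' * y) = f (m + 1, m) * x := by
    refine h.exists_mul_norm_eq ?_ ?_
    · rw [mul_assoc, h.x_mul_x, mul_zero]
    · rw [hm, mul_assoc, h.y_mul_y, mul_zero]
  refine h.exists_quadrantDifferential_eq_of_middle (m := m + 1) (by lia) (by lia)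
    (fun i j hij ↦ hf i j (by lia)) c c (fun _ ↦ rfl) (by lia) ?_ ?_
  · intro j hj
    obtain rfl : j = m := by lia
    rw [show 2 * j + 1 - j = j + 1 by lia, add_mul, mul_assoc, h.y'_mul_x, hc,
      CharTwo.add_self_eq_zero]
  · intro i hi
    obtain rfl : i = m := by lia
    rw [show 2 * i + 1 - i = i + 1 by lia, add_mul, mul_assoc, hc, hm, CharTwo.add_self_eq_zero]

lemma exists_quadrantDifferential_eq_of_even (h : IsDihedralQuadruple x y x' y')
    {f : ℕ × ℕ → R} {m : ℕ}
    (hf : ∀ i j, i + j + 1 = 2 * m → quadrantDifferential x y x' y' f (i, j) = 0)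
    (hf_zero : m = 0 → f (0, 0) * (x' * y) = 0) :
    ∃ g : ℕ × ℕ → R, ∀ i j, i + j = 2 * m →
      quadrantDifferential x y x' y' g (i, j) = f (i, j) := by
  have below (j : ℕ) (hj : j + 1 = m) : f (2 * m - j, j) * x = f (m, m) * y' := by
    have := hf m j (by lia)
    rwa [quadrantDifferential_of_lt (by lia), hj, CharTwo.add_eq_zero,
      show m + 1 = 2 * m - j by lia] at this
  have above (i : ℕ) (hi : i + 1 = m) : f (i, 2 * m - i) * y = f (m, m) * x' := by
    have := hf i m (by lia)
    rwa [quadrantDifferential_of_gt (by lia), hi, CharTwo.add_eq_zero,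
      show m + 1 = 2 * m - i by lia] at this
  have hmid : f (m, m) * (x' * y) = 0 := by
    rcases m with _ | m
    · exact hf_zero rfl
    · rw [← mul_assoc, ← above m rfl, mul_assoc, h.y_mul_y, mul_zero]
  obtain ⟨a, b, hab⟩ := h.exists_mul_x_add_mul_y_eq hmid
  refine h.exists_quadrantDifferential_eq_of_middle (m := m) le_rfl (by lia) hf a b (by lia)
    (fun _ ↦ hab) ?_ ?_
  · intro j hj
    calc (f (2 * m - j, j) + a * y') * x = f (m, m) * y' + a * x * y' := by
          rw [add_mul, below j hj, mul_assoc, mul_assoc, h.y'_mul_x, h.x_mul_y']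
      _ = b * (y * y') := by
          rw [← hab, add_mul, add_right_comm, CharTwo.add_self_eq_zero, zero_add, mul_assoc]
      _ = 0 := by rw [h.y_mul_y', mul_zero]
  · intro i hi
    calc (f (i, 2 * m - i) + b * x') * y = f (m, m) * x' + b * y * x' := by
          rw [add_mul, above i hi, mul_assoc, mul_assoc, h.y_mul_x']
      _ = a * (x * x') := by
          rw [← hab, add_mul, add_assoc, CharTwo.add_self_eq_zero, add_zero, mul_assoc]
      _ = 0 := by rw [h.x_mul_x', mul_zero]

lemma exists_quadrantDifferential_eq (h : IsDihedralQuadruple x y x' y') {f : ℕ × ℕ → R} {N : ℕ}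
    (hf : ∀ i j, i + j + 1 = N → quadrantDifferential x y x' y' f (i, j) = 0)
    (hf_zero : N = 0 → f (0, 0) * (x' * y) = 0) :
    ∃ g : ℕ × ℕ → R, ∀ i j, i + j = N → quadrantDifferential x y x' y' g (i, j) = f (i, j) := by
  obtain ⟨m, rfl | rfl⟩ := N.even_or_odd'
  · exact h.exists_quadrantDifferential_eq_of_even hf fun hm ↦ hf_zero (by lia)
  · exact h.exists_quadrantDifferential_eq_of_odd fun i j hij ↦ hf i j (by lia)

end IsDihedralQuadruple

open Finset.HasAntidiagonal (antidiagonal mem_antidiagonal)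

/-- The differential, from degree `n + 1` to degree `n`, of the total complex of the dihedral
double complex. -/
noncomputable def dihedralDifferential (x y x' y' : R) (n : ℕ) :
    (antidiagonal (n + 1) → R) →ₗ[R] (antidiagonal n → R) :=
  LinearMap.funLeft R R Subtype.val ∘ₗ quadrantDifferential x y x' y' ∘ₗ
    Function.ExtendByZero.linearMap R Subtype.val

lemma dihedralDifferential_restrict (f : ℕ × ℕ → R) (n : ℕ) :
    dihedralDifferential x y x' y' n (fun p ↦ f p) =
      fun p : antidiagonal n ↦ quadrantDifferential x y x' y' f p := by
  have extend_eq (p : ℕ × ℕ) (hp : p ∈ antidiagonal (n + 1)) :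
      Function.ExtendByZero.linearMap R Subtype.val (fun q : antidiagonal (n + 1) ↦ f q) p = f p :=
    Subtype.val_injective.extend_apply (fun q : antidiagonal (n + 1) ↦ f q) 0 ⟨p, hp⟩
  ext ⟨⟨i, j⟩, hij⟩
  rw [mem_antidiagonal] at hij
  simp only [dihedralDifferential, LinearMap.comp_apply, LinearMap.funLeft_apply]
  rw [quadrantDifferential_apply, quadrantDifferential_apply,
    extend_eq _ (mem_antidiagonal.2 (by lia)),
    extend_eq _ (mem_antidiagonal.2 (by lia))]

lemma exists_restrict_antidiagonal_eq {n : ℕ} (f : antidiagonal n → R) :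
    ∃ F : ℕ × ℕ → R, (fun p : antidiagonal n ↦ F p) = f :=
  ⟨Function.extend Subtype.val f 0, funext (Subtype.val_injective.extend_apply f 0)⟩

namespace IsDihedralQuadruple

variable [CharP R 2]

lemma exact_dihedralDifferential (h : IsDihedralQuadruple x y x' y') (n : ℕ) :
    Function.Exact (dihedralDifferential x y x' y' (n + 1)) (dihedralDifferential x y x' y' n) := by
  intro f
  obtain ⟨f, rfl⟩ := exists_restrict_antidiagonal_eq f
  constructor
  · intro hf
    rw [dihedralDifferential_restrict] at hf
    obtain ⟨g, hg⟩ := h.exists_quadrantDifferential_eq (N := n + 1) (f := f)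
      (fun i j hij ↦ congrFun hf ⟨(i, j), mem_antidiagonal.2 (by lia)⟩) (by lia)
    exact ⟨fun p ↦ g p, (dihedralDifferential_restrict g _).trans <|
      funext fun p ↦ hg _ _ (mem_antidiagonal.1 p.2)⟩
  · rintro ⟨g, hg⟩
    obtain ⟨g, rfl⟩ := exists_restrict_antidiagonal_eq g
    rw [← hg, dihedralDifferential_restrict, dihedralDifferential_restrict,
      h.quadrantDifferential_quadrantDifferential]
    rfl

lemma mem_range_dihedralDifferential_zero_iff (h : IsDihedralQuadruple x y x' y')
    (f : antidiagonal 0 → R) :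
    f ∈ Set.range (dihedralDifferential x y x' y' 0) ↔
      f ⟨(0, 0), mem_antidiagonal.2 rfl⟩ * (x' * y) = 0 := by
  obtain ⟨f, rfl⟩ := exists_restrict_antidiagonal_eq f
  constructor
  · rintro ⟨g, hg⟩
    obtain ⟨g, rfl⟩ := exists_restrict_antidiagonal_eq g
    rw [← hg, dihedralDifferential_restrict]
    change quadrantDifferential x y x' y' g (0, 0) * _ = 0
    rw [quadrantDifferential_diag, add_mul, mul_assoc, mul_assoc, ← mul_assoc x, h.x_mul_x',
      ← h.y_mul_x', ← mul_assoc y, h.y_mul_y, zero_mul, zero_mul, mul_zero, mul_zero, add_zero]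
  · intro hf
    obtain ⟨g, hg⟩ := h.exists_quadrantDifferential_eq (N := 0) (f := f) (by lia) fun _ ↦ hf
    exact ⟨fun p ↦ g p, (dihedralDifferential_restrict g _).trans <|
      funext fun p ↦ hg _ _ (mem_antidiagonal.1 p.2)⟩

end IsDihedralQuadruple

end DihedralComplex

section ProjectiveResolution

universe u v

lemma quasiIso_toSingle₀Equiv_symm {R : Type u} [Ring R] {K : ChainComplex (ModuleCat.{v} R) ℕ}
    {M : ModuleCat.{v} R} (ε : K.X 0 ⟶ M) (w : K.d 1 0 ≫ ε = 0)
    (hK : ∀ n, Function.Exact (K.d (n + 2) (n + 1)).hom (K.d (n + 1) n).hom)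
    (hε : Function.Exact (K.d 1 0).hom ε.hom) (hε_surj : Function.Surjective ε.hom) :
    QuasiIso ((K.toSingle₀Equiv M).symm ⟨ε, w⟩) where
  quasiIsoAt n := by
    rcases n with _ | n
    · rw [ChainComplex.quasiIsoAt₀_iff, ShortComplex.quasiIso_iff_of_zeros' _
        (K.shape 0 0 (by simp)) rfl rfl]
      constructor
      · rw [ShortComplex.moduleCat_exact_iff]
        intro z hz
        exact (hε z).1 (by simpa [ChainComplex.toSingle₀Equiv] using! hz)
      · rw [ModuleCat.epi_iff_surjective]
        simpa [ChainComplex.toSingle₀Equiv] using! hε_surj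
    · rw [quasiIsoAt_iff_exactAt' (hL := ChainComplex.exactAt_succ_single_obj ..),
        HomologicalComplex.exactAt_iff' _ (n + 2) (n + 1) n (by simp) (by simp),
        ShortComplex.moduleCat_exact_iff]
      exact fun z hz ↦ (hK n z).1 hz

variable {R : Type u} [Ring R] {C : ℕ → Type u} [∀ n, AddCommGroup (C n)] [∀ n, Module R (C n)]

/-- The chain complex of modules `⋯ → C 2 → C 1 → C 0` with differentials the linear maps `d n`. -/
noncomputable def linearChainComplex (d : ∀ n, C (n + 1) →ₗ[R] C n)
    (hd : ∀ n, d n ∘ₗ d (n + 1) = 0) : ChainComplex (ModuleCat R) ℕ :=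
  ChainComplex.of (fun n ↦ ModuleCat.of R (C n)) (fun n ↦ ModuleCat.ofHom (d n))
    fun n ↦ ModuleCat.hom_ext (hd n)

lemma linearChainComplex_d (d : ∀ n, C (n + 1) →ₗ[R] C n) (hd : ∀ n, d n ∘ₗ d (n + 1) = 0)
    (n : ℕ) : (linearChainComplex d hd).d (n + 1) n = ModuleCat.ofHom (d n) :=
  ChainComplex.of_d (fun n ↦ ModuleCat.of R (C n)) (fun n ↦ ModuleCat.ofHom (d n)) n

/-- The projective resolution of `M` given by an exact sequence of linear maps
`⋯ → C 2 → C 1 → C 0 → M → 0` between projective modules `C n`. -/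
noncomputable def projectiveResolutionOfExact [∀ n, Module.Projective R (C n)]
    {M : Type u} [AddCommGroup M] [Module R M] (d : ∀ n, C (n + 1) →ₗ[R] C n) (ε : C 0 →ₗ[R] M)
    (hd : ∀ n, Function.Exact (d (n + 1)) (d n)) (hε : Function.Exact (d 0) ε)
    (hε_surj : Function.Surjective ε) :
    ProjectiveResolution (ModuleCat.of R M) where
  complex := linearChainComplex d fun n ↦ (hd n).linearMap_comp_eq_zero
  projective n := by
    change Projective (ModuleCat.of R (C n))
    infer_instance
  hasHomology := inferInstance
  π := (ChainComplex.toSingle₀Equiv _ _).symm ⟨ModuleCat.ofHom ε, by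
    rw [linearChainComplex_d]
    exact ModuleCat.hom_ext hε.linearMap_comp_eq_zero⟩
  quasiIso := by
    refine quasiIso_toSingle₀Equiv_symm _ _ (fun n ↦ ?_) ?_ hε_surj
    · rw [linearChainComplex_d, linearChainComplex_d]
      exact hd n
    · rw [linearChainComplex_d]
      exact hε

/-- If an additive functor kills the differentials of a projective resolution, then its left
derived functors are its values on the terms of the resolution. -/
noncomputable def leftDerivedObjIsoOfMapEqZero {C : Type*} [Category* C] [Abelian C]
    [HasProjectiveResolutions C] {D : Type*} [Category* D] [Abelian D] {Z : C}
    (P : ProjectiveResolution Z) (F : C ⥤ D) [F.Additive]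
    (hF : ∀ n, F.map (P.complex.d (n + 1) n) = 0) (n : ℕ) :
    (F.leftDerived n).obj Z ≅ F.obj (P.complex.X n) :=
  let K := (F.mapHomologicalComplex (ComplexShape.down ℕ)).obj P.complex
  have hK (i j : ℕ) : K.d i j = 0 := by
    by_cases hij : j + 1 = i
    · subst hij
      exact hF j
    · exact K.shape i j hij
  P.isoLeftDerivedObj F n ≪≫
    (K.isoHomologyπ (n + 1) n (ChainComplex.prev ..) (hK _ _)).symm ≪≫
      K.iCyclesIso n _ rfl (hK _ _)

/-- The left derived functors of `F` at the cokernel `M` of an exact sequence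
`⋯ → C 2 → C 1 → C 0 → M → 0` of linear maps killed by `F`, with `C n` projective. -/
noncomputable def leftDerivedObjIsoOfExact [∀ n, Module.Projective R (C n)]
    {M : Type u} [AddCommGroup M] [Module R M] (d : ∀ n, C (n + 1) →ₗ[R] C n) (ε : C 0 →ₗ[R] M)
    (hd : ∀ n, Function.Exact (d (n + 1)) (d n)) (hε : Function.Exact (d 0) ε)
    (hε_surj : Function.Surjective ε) {D : Type*} [Category* D] [Abelian D]
    (F : ModuleCat.{u} R ⥤ D) [F.Additive] (hF : ∀ n, F.map (ModuleCat.ofHom (d n)) = 0) (n : ℕ) :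
    (F.leftDerived n).obj (ModuleCat.of R M) ≅ F.obj (ModuleCat.of R (C n)) :=
  leftDerivedObjIsoOfMapEqZero (projectiveResolutionOfExact d ε hd hε hε_surj) F
    (fun n ↦ (congrArg F.map (linearChainComplex_d d
      (fun n ↦ (hd n).linearMap_comp_eq_zero) n)).trans (hF n)) n

end ProjectiveResolution

section Coinvariants

variable {k S : Type} [CommRing k] [Ring S] [Algebra k S] {P : Set (S × S)} {ι : Type}

lemma smul_mem_relSub {r : S} (hr : r ∈ Submodule.span k ((fun p ↦ p.1 - p.2) '' P))
    (N : ModuleCat S) (v : N) : r • v ∈ relSub k S P N := by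
  induction hr using Submodule.span_induction with
  | mem r hr =>
    obtain ⟨p, hp, rfl⟩ := hr
    rw [sub_smul]
    exact Submodule.subset_span ⟨p, hp, v, rfl⟩
  | zero =>
    rw [zero_smul]
    exact (relSub k S P N).zero_mem
  | add r r' _ _ hr hr' =>
    rw [add_smul]
    exact (relSub k S P N).add_mem hr hr'
  | smul c r _ hr =>
    rw [Algebra.smul_def, mul_smul]
    exact (relSub k S P N).smul_mem c hr

/-- The componentwise augmentation of a free module, as a `k`-linear map on the restriction of
scalars used by `coinvFunctor`. -/
def piAugmentation (aug : S →ₐ[k] k) (ι : Type) :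
    (ModuleCat.restrictScalars (algebraMap k S)).obj (ModuleCat.of S (ι → S)) →ₗ[k] (ι → k) where
  toFun f i := aug ((f : ι → S) i)
  map_add' _ _ := funext fun _ ↦ map_add ..
  map_smul' c _ := funext fun _ ↦
    (map_mul aug (algebraMap k S c) _).trans (congrArg (· * _) (aug.commutes c))

lemma piAugmentation_surjective (aug : S →ₐ[k] k) : Function.Surjective (piAugmentation aug ι) :=
  fun v ↦ ⟨fun i ↦ algebraMap k S (v i), funext fun i ↦ aug.commutes (v i)⟩

variable [Finite ι] {aug : S →ₐ[k] k}

lemma relSub_pi_eq_ker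
    (hP : Submodule.span k ((fun p ↦ p.1 - p.2) '' P) = aug.toLinearMap.ker) :
    relSub k S P (ModuleCat.of S (ι → S)) = (piAugmentation aug ι).ker := by
  classical
  have := Fintype.ofFinite ι
  refine le_antisymm (Submodule.span_le.2 ?_) fun f hf ↦ ?_
  · rintro _ ⟨p, hp, f, rfl⟩
    have hp_aug : aug (p.1 - p.2) = 0 :=
      LinearMap.mem_ker.1 (hP.le (Submodule.subset_span ⟨p, hp, rfl⟩))
    refine funext fun i ↦ ?_
    change aug (p.1 * (f : ι → S) i - p.2 * (f : ι → S) i) = 0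
    rw [← sub_mul, map_mul, hp_aug, zero_mul]
  · have hf_sum : f = ∑ i, (f : ι → S) i • (Pi.single i 1 : ι → S) := pi_eq_sum_univ' _
    rw [hf_sum]
    exact Submodule.sum_mem _ fun i _ ↦
      smul_mem_relSub (hP.ge (congrFun hf i)) (ModuleCat.of S (ι → S)) (Pi.single i 1 : ι → S)

/-- The coinvariants of a finite free module. -/
noncomputable def coinvPiEquiv
    (hP : Submodule.span k ((fun p ↦ p.1 - p.2) '' P) = aug.toLinearMap.ker) :
    (coinvFunctor k S P).obj (ModuleCat.of S (ι → S)) ≃ₗ[k] (ι → k) :=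
  (Submodule.quotEquivOfEq _ _ (relSub_pi_eq_ker hP)).trans
    ((piAugmentation aug ι).quotKerEquivOfSurjective (piAugmentation_surjective aug))

lemma coinvFunctor_map_eq_zero
    (hP : Submodule.span k ((fun p ↦ p.1 - p.2) '' P) = aug.toLinearMap.ker)
    {N : Type} [AddCommGroup N] [Module S N] (φ : N →ₗ[S] (ι → S)) (hφ : ∀ v i, aug (φ v i) = 0) :
    (coinvFunctor k S P).map (ModuleCat.ofHom φ) = 0 := by
  refine ModuleCat.hom_ext (Submodule.linearMap_qext _ (LinearMap.ext fun v ↦ ?_))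
  refine (Submodule.Quotient.mk_eq_zero _).2 ?_
  rw [relSub_pi_eq_ker hP]
  exact funext (hφ v)

/-- A minimal free resolution of the trivial module computes the left derived functors of the
coinvariants: its differentials vanish after taking coinvariants. -/
noncomputable def leftDerivedCoinvEquivOfMinimal
    (hP : Submodule.span k ((fun p ↦ p.1 - p.2) '' P) = aug.toLinearMap.ker) [Module S k]
    {ι : ℕ → Type} [∀ n, Finite (ι n)] (d : ∀ n, (ι (n + 1) → S) →ₗ[S] (ι n → S))
    (ε : (ι 0 → S) →ₗ[S] k) (hd : ∀ n, Function.Exact (d (n + 1)) (d n))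
    (hε : Function.Exact (d 0) ε) (hε_surj : Function.Surjective ε)
    (hd_min : ∀ n f i, aug (d n f i) = 0) (n : ℕ) :
    ((coinvFunctor k S P).leftDerived n).obj (ModuleCat.of S k) ≃ₗ[k] (ι n → k) :=
  have hF (n : ℕ) : (coinvFunctor k S P).map (ModuleCat.ofHom (d n)) = 0 :=
    coinvFunctor_map_eq_zero hP (d n) (hd_min n)
  (leftDerivedObjIsoOfExact (C := fun n ↦ ι n → S) d ε hd hε hε_surj
    (coinvFunctor k S P) hF n).toLinearEquiv.trans (coinvPiEquiv hP)

end Coinvariants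

section GroupAlgebra

open MonoidAlgebra

variable {k G : Type*} [CommRing k] [Group G]

lemma charP_monoidAlgebra (p : ℕ) [CharP k p] : CharP k[G] p :=
  charP_of_injective_algebraMap (R := k) (A := k[G]) single_right_injective p

/-- The augmentation of the group algebra `k[G]`, sending every element of `G` to `1`. -/
noncomputable abbrev augmentation (k G : Type*) [CommRing k] [Group G] : k[G] →ₐ[k] k :=
  MonoidAlgebra.lift k k G 1

lemma span_single_sub_one :
    Submodule.span k (Set.range fun g : G ↦ single g (1 : k) - 1) =
      (augmentation k G).toLinearMap.ker := by
  refine le_antisymm (Submodule.span_le.2 ?_) fun r hr ↦ ?_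
  · rintro _ ⟨g, rfl⟩
    simp
  · have sub_augmentation_mem (r : k[G]) : r - augmentation k G r • (1 : k[G]) ∈
        Submodule.span k (Set.range fun g : G ↦ single g (1 : k) - 1) := by
      induction r using MonoidAlgebra.induction_linear with
      | zero => simp
      | add r r' hr hr' =>
        rw [map_add, add_smul, add_sub_add_comm]
        exact add_mem hr hr'
      | single g c =>
        have : single g c - augmentation k G (single g c) • (1 : k[G]) =
            c • (single g 1 - 1) := by
          simp [smul_sub]
        rw [this]
        exact Submodule.smul_mem _ c (Submodule.subset_span ⟨g, rfl⟩)
    have := sub_augmentation_mem r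
    rwa [show augmentation k G r = 0 from hr, zero_smul, sub_zero] at this

lemma exists_mul_add_mul_eq_of_closure_eq_top {s t : G} (hst : Subgroup.closure {s, t} = ⊤)
    {r : k[G]} (hr : augmentation k G r = 0) :
    ∃ u w : k[G], u * (single s 1 - 1) + w * (single t 1 - 1) = r := by
  let I : Submodule k[G] k[G] := .span k[G] {single s 1 - 1, single t 1 - 1}
  suffices h : r ∈ I from Submodule.mem_span_pair.1 h
  have single_sub_one_mem (g : G) : (single g 1 - 1 : k[G]) ∈ I := by
    have hg : g ∈ Subgroup.closure {s, t} := hst ▸ Subgroup.mem_top g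
    induction hg using Subgroup.closure_induction with
    | mem g hg =>
      refine Submodule.subset_span ?_
      rcases hg with rfl | rfl
      · exact .inl rfl
      · exact .inr rfl
    | one => simp [one_def]
    | mul g g' _ _ hg hg' =>
      have : (single (g * g') 1 - 1 : k[G]) =
          single g 1 * (single g' 1 - 1) + (single g 1 - 1) := by
        rw [mul_sub, single_mul_single, mul_one, mul_one, sub_add_sub_cancel]
      exact this ▸ I.add_mem (I.smul_mem _ hg') hg
    | inv g _ hg =>
      have : (single g⁻¹ 1 - 1 : k[G]) = -single g⁻¹ 1 * (single g 1 - 1) := by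
        rw [neg_mul, mul_sub, single_mul_single, inv_mul_cancel, mul_one, mul_one, ← one_def,
          neg_sub]
      exact this ▸ I.smul_mem _ hg
  have hr : r ∈ Submodule.span k (Set.range fun g : G ↦ single g (1 : k) - 1) :=
    span_single_sub_one.ge hr
  refine (Submodule.span_le (p := I.restrictScalars k)).2 ?_ hr
  rintro _ ⟨g, rfl⟩
  exact single_sub_one_mem g

lemma exists_coeff_eq_of_closure_eq_top {s t : G} (hst : Subgroup.closure {s, t} = ⊤)
    {r : k[G]} (hs : r * single s 1 = r) (ht : r * single t 1 = r) (g : G) :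
    r.coeff g = r.coeff 1 := by
  have mul_single (g : G) : r * single g 1 = r := by
    have hg : g ∈ Subgroup.closure {s, t} := hst ▸ Subgroup.mem_top g
    induction hg using Subgroup.closure_induction with
    | mem g hg =>
      rcases hg with rfl | rfl
      · exact hs
      · exact ht
    | one => rw [← one_def, mul_one]
    | mul g g' _ _ hg hg' => rw [← mul_one (1 : k), ← single_mul_single, ← mul_assoc, hg, hg']
    | inv g _ hg =>
      nth_rw 1 [← hg]
      rw [mul_assoc, single_mul_single, mul_inv_cancel, mul_one, ← one_def, mul_one]
  rw [← mul_single g, coeff_mul_single_apply, mul_inv_cancel, mul_one, mul_single]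

section SubgroupSum

variable [Finite G]

/-- The sum of the elements of the subgroup `H` in the group algebra of a finite group. -/
noncomputable def subgroupSum (k : Type*) [CommRing k] (H : Subgroup G) : k[G] :=
  ofCoeff (Finsupp.equivFunOnFinite.symm ((H : Set G).indicator 1))

lemma coeff_subgroupSum (H : Subgroup G) (g : G) [Decidable (g ∈ H)] :
    (subgroupSum k H).coeff g = if g ∈ H then 1 else 0 :=
  Set.indicator_apply ..

lemma single_mul_subgroupSum {H : Subgroup G} {g : G} (hg : g ∈ H) :
    single g 1 * subgroupSum k H = subgroupSum k H := by
  classical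
  ext h
  simp [coeff_single_mul_apply, coeff_subgroupSum, H.mul_mem_cancel_left (H.inv_mem hg)]

lemma subgroupSum_mul_single {H : Subgroup G} {g : G} (hg : g ∈ H) :
    subgroupSum k H * single g 1 = subgroupSum k H := by
  classical
  ext h
  simp [coeff_mul_single_apply, coeff_subgroupSum, H.mul_mem_cancel_right (H.inv_mem hg)]

lemma single_add_one_mul_subgroupSum {H : Subgroup G} (hH : H.index = 2) {g : G} (hg : g ∉ H) :
    (single g 1 + 1) * subgroupSum k H = subgroupSum k ⊤ := by
  classical
  ext h
  by_cases hh : h ∈ H <;>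
    simp [add_mul, coeff_single_mul_apply, coeff_subgroupSum, H.mul_mem_iff_of_index_two hH, hg, hh]

lemma subgroupSum_mul_single_add_one {H : Subgroup G} (hH : H.index = 2) {g : G} (hg : g ∉ H) :
    subgroupSum k H * (single g 1 + 1) = subgroupSum k ⊤ := by
  classical
  ext h
  by_cases hh : h ∈ H <;>
    simp [mul_add, coeff_mul_single_apply, coeff_subgroupSum, H.mul_mem_iff_of_index_two hH, hg, hh]

lemma mul_subgroupSum_top (r : k[G]) :
    r * subgroupSum k ⊤ = augmentation k G r • subgroupSum k ⊤ := by
  induction r using MonoidAlgebra.induction_linear with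
  | zero => simp
  | add r r' hr hr' => rw [add_mul, hr, hr', map_add, add_smul]
  | single g c =>
    rw [← mul_one c, ← smul_single', smul_mul_assoc, single_mul_subgroupSum (Subgroup.mem_top g)]
    simp

lemma mul_subgroupSum_top_eq_zero_iff {r : k[G]} :
    r * subgroupSum k ⊤ = 0 ↔ augmentation k G r = 0 := by
  classical
  rw [mul_subgroupSum_top]
  refine ⟨fun hr ↦ ?_, fun hr ↦ by rw [hr, zero_smul]⟩
  simpa [coeff_subgroupSum] using congrArg (fun r : k[G] ↦ r.coeff 1) hr

end SubgroupSum

section CharTwo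

variable [CharP k 2]

lemma mul_single_add_one_eq_zero_iff {r : k[G]} {g : G} :
    r * (single g 1 + 1) = 0 ↔ r * single g 1 = r := by
  have := charP_monoidAlgebra (k := k) (G := G) 2
  rw [mul_add, mul_one, CharTwo.add_eq_zero]

lemma single_add_one_mul_eq_zero_iff {r : k[G]} {g : G} :
    (single g 1 + 1) * r = 0 ↔ single g 1 * r = r := by
  have := charP_monoidAlgebra (k := k) (G := G) 2
  rw [add_mul, one_mul, CharTwo.add_eq_zero]

lemma single_add_one_mul_self {g : G} (hg : g * g = 1) :
    (single g 1 + 1 : k[G]) * (single g 1 + 1) = 0 := by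
  rw [single_add_one_mul_eq_zero_iff, mul_add, single_mul_single, hg, mul_one, mul_one, ← one_def,
    add_comm]

lemma exists_mul_single_add_one_eq {H : Subgroup G} (hH : H.index = 2) {g : G} (hg : g ∉ H)
    (hgg : g * g = 1) {r : k[G]} (hr : r * (single g 1 + 1) = 0) :
    ∃ u : k[G], u * (single g 1 + 1) = r := by
  classical
  have coeff_mul_eq (h : G) : r.coeff (h * g) = r.coeff h := by
    conv_rhs => rw [← mul_single_add_one_eq_zero_iff.1 hr, coeff_mul_single_apply, mul_one,
      ← eq_inv_of_mul_eq_one_left hgg]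
  refine ⟨ofCoeff (r.coeff.filter (· ∈ H)), ?_⟩
  ext h
  rw [mul_add, mul_one, coeff_add, Finsupp.add_apply, coeff_mul_single_apply, mul_one,
    ← eq_inv_of_mul_eq_one_left hgg, coeff_ofCoeff, Finsupp.filter_apply, Finsupp.filter_apply,
    coeff_mul_eq]
  by_cases hh : h ∈ H <;> simp [H.mul_mem_iff_of_index_two hH, hg, hh]

lemma isDihedralQuadruple_single_add_one [Finite G] {s t : G} (hs : s * s = 1) (ht : t * t = 1)
    (hst : Subgroup.closure {s, t} = ⊤) {H K : Subgroup G} (hH : H.index = 2) (hK : K.index = 2)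
    (hsK : s ∈ K) (htK : t ∉ K) (htH : t ∈ H) (hsH : s ∉ H) :
    IsDihedralQuadruple (single s 1 + 1 : k[G]) (single t 1 + 1) (subgroupSum k K)
      (subgroupSum k H) := by
  have := charP_monoidAlgebra (k := k) (G := G) 2
  have norm_eq := subgroupSum_mul_single_add_one (k := k) hK htK
  refine
    { x_mul_x := single_add_one_mul_self hs
      y_mul_y := single_add_one_mul_self ht
      x_mul_x' := single_add_one_mul_eq_zero_iff.2 (single_mul_subgroupSum hsK)
      x'_mul_x := mul_single_add_one_eq_zero_iff.2 (subgroupSum_mul_single hsK)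
      y_mul_y' := single_add_one_mul_eq_zero_iff.2 (single_mul_subgroupSum htH)
      y'_mul_y := mul_single_add_one_eq_zero_iff.2 (subgroupSum_mul_single htH)
      x_mul_y' := (single_add_one_mul_subgroupSum hH hsH).trans norm_eq.symm
      y'_mul_x := (subgroupSum_mul_single_add_one hH hsH).trans norm_eq.symm
      y_mul_x' := (single_add_one_mul_subgroupSum hK htK).trans norm_eq.symm
      exists_mul_x_eq := exists_mul_single_add_one_eq hH hsH hs
      exists_mul_y_eq := exists_mul_single_add_one_eq hK htK ht
      exists_mul_norm_eq {r} hrs hrt := ⟨single 1 (r.coeff 1), ?_⟩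
      exists_mul_x_add_mul_y_eq {r} hr := ?_ }
  · classical
    ext g
    rw [norm_eq, coeff_single_mul_apply, coeff_subgroupSum, if_pos (Subgroup.mem_top _), mul_one,
      exists_coeff_eq_of_closure_eq_top hst (mul_single_add_one_eq_zero_iff.1 hrs)
        (mul_single_add_one_eq_zero_iff.1 hrt) g]
  · rw [norm_eq] at hr
    simpa only [CharTwo.sub_eq_add] using exists_mul_add_mul_eq_of_closure_eq_top hst
      (mul_subgroupSum_top_eq_zero_iff.1 hr)

end CharTwo

end GroupAlgebra

section Homology

open Finset.HasAntidiagonal (antidiagonal mem_antidiagonal)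

variable {k S : Type} [CommRing k] [Ring S] [Algebra k S] {P : Set (S × S)} {aug : S →ₐ[k] k}
  {x y x' y' : S}

lemma IsDihedralQuadruple.map_dihedralDifferential_eq_zero (h : IsDihedralQuadruple x y x' y')
    (haug : ∀ r, r * (x' * y) = 0 → aug r = 0) (n : ℕ) (f : antidiagonal (n + 1) → S)
    (p : antidiagonal n) : aug (dihedralDifferential x y x' y' n f p) = 0 := by
  have hx : aug x = 0 := haug x (by rw [← mul_assoc, h.x_mul_x', zero_mul])
  have hx' : aug x' = 0 := haug x' (by rw [← mul_assoc, h.x'_mul_x', zero_mul])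
  have hy : aug y = 0 := haug y (by rw [← h.y_mul_x', ← mul_assoc, h.y_mul_y, zero_mul])
  have hy' : aug y' = 0 := haug y' (by rw [← h.y'_mul_x, ← mul_assoc, h.y'_mul_y', zero_mul])
  obtain ⟨f, rfl⟩ := exists_restrict_antidiagonal_eq f
  rw [dihedralDifferential_restrict]
  obtain ⟨⟨i, j⟩, _⟩ := p
  simp only [quadrantDifferential_apply, map_add, map_mul, apply_ite aug, hx, hx', hy, hy',
    ite_self, mul_zero, add_zero]

/-- The left derived functors of the coinvariants at the trivial module `k`, computed by the
dihedral double complex. -/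
noncomputable def leftDerivedCoinvEquivOfDihedral [CharP S 2]
    (hP : Submodule.span k ((fun p ↦ p.1 - p.2) '' P) = aug.toLinearMap.ker)
    (h : IsDihedralQuadruple x y x' y') (haug : ∀ r, r * (x' * y) = 0 ↔ aug r = 0) (n : ℕ) :
    letI : Module S k := Module.compHom k aug.toRingHom
    ((coinvFunctor k S P).leftDerived n).obj (ModuleCat.of S k) ≃ₗ[k] (antidiagonal n → k) :=
  letI : Module S k := Module.compHom k aug.toRingHom
  let ε : (antidiagonal 0 → S) →ₗ[S] k :=
    { toFun f := aug (f ⟨(0, 0), mem_antidiagonal.2 rfl⟩)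
      map_add' _ _ := map_add ..
      map_smul' _ _ := map_mul .. }
  have hε : Function.Exact (dihedralDifferential x y x' y' 0) ε := fun f ↦
    (haug _).symm.trans (h.mem_range_dihedralDifferential_zero_iff f).symm
  have hε_surj : Function.Surjective ε := fun c ↦ ⟨fun _ ↦ algebraMap k S c, aug.commutes c⟩
  leftDerivedCoinvEquivOfMinimal (ι := fun n ↦ antidiagonal n) hP (dihedralDifferential x y x' y')
    ε h.exact_dihedralDifferential hε hε_surj
    (h.map_dihedralDifferential_eq_zero fun r ↦ (haug r).1) n

lemma finrank_groupHomology_of_isDihedralQuadruple {k G : Type} [CommRing k] [Group G] [CharP k 2]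
    {x y x' y' : MonoidAlgebra k G} (h : IsDihedralQuadruple x y x' y')
    (haug : ∀ r, r * (x' * y) = 0 ↔ augmentation k G r = 0) (n : ℕ) :
    Module.finrank k (GroupHomology k G n) = n + 1 := by
  have := charP_monoidAlgebra (k := k) (G := G) 2
  have : Nontrivial k := CharP.nontrivial_of_char_ne_one (v := 2) (by decide)
  have hP : Submodule.span k ((fun p ↦ p.1 - p.2) ''
      {p | ∃ g : G, p = (MonoidAlgebra.single g (1 : k), 1)}) =
        (augmentation k G).toLinearMap.ker := by
    rw [← span_single_sub_one]
    congr 1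
    ext r
    simp [eq_comm]
  rw [GroupHomology, (leftDerivedCoinvEquivOfDihedral hP h haug n).finrank_eq,
    Module.finrank_fintype_fun_eq_card, Fintype.card_coe, Finset.Nat.card_antidiagonal]

lemma finrank_groupHomology_of_closure_involutions_eq_top {k G : Type} [CommRing k] [CharP k 2]
    [Group G] [Finite G] {s t : G} (hs : s * s = 1) (ht : t * t = 1)
    (hst : Subgroup.closure {s, t} = ⊤) {H K : Subgroup G} (hH : H.index = 2) (hK : K.index = 2)
    (hsK : s ∈ K) (htK : t ∉ K) (htH : t ∈ H) (hsH : s ∉ H) (n : ℕ) :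
    Module.finrank k (GroupHomology k G n) = n + 1 := by
  refine finrank_groupHomology_of_isDihedralQuadruple
    (isDihedralQuadruple_single_add_one hs ht hst hH hK hsK htK htH hsH) (fun r ↦ ?_) n
  rw [subgroupSum_mul_single_add_one hK htK, mul_subgroupSum_top_eq_zero_iff]

end Homology

section Dihedral

open DihedralGroup

lemma index_ker_eq_two {G : Type*} [Group G] {φ : G →* Multiplicative (ZMod 2)} {g : G}
    (hg : φ g ≠ 1) : φ.ker.index = 2 := by
  refine Subgroup.index_eq_two_iff_exists_notMem_and.2 ⟨g, hg, fun h ↦ ?_⟩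
  rw [MonoidHom.mem_ker, MonoidHom.mem_ker, map_mul]
  generalize φ g = a at hg
  generalize φ h = b
  decide +revert

lemma closure_sr_zero_sr_one (n : ℕ) :
    Subgroup.closure {sr (0 : ZMod n), sr (1 : ZMod n)} = ⊤ := by
  set C := Subgroup.closure {sr (0 : ZMod n), sr (1 : ZMod n)}
  have sr_zero_mem : sr 0 ∈ C := Subgroup.subset_closure (.inl rfl)
  have sr_one_mem : sr 1 ∈ C := Subgroup.subset_closure (.inr rfl)
  have r_mem (i : ZMod n) : r i ∈ C := by
    have : r 1 ∈ C := by simpa using C.mul_mem sr_zero_mem sr_one_mem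
    obtain ⟨i, rfl⟩ := ZMod.intCast_surjective i
    exact r_one_zpow (n := n) i ▸ C.zpow_mem this i
  refine (Subgroup.eq_top_iff' C).2 ?_
  rintro (i | i)
  · exact r_mem i
  · simpa using C.mul_mem sr_zero_mem (r_mem i)

/-- The homomorphism from the dihedral group of order `4 * m` to `ℤ/2` that reduces the index of
rotations modulo two, and the index of reflections modulo two up to the shift `a`. -/
def dihedralParity (m : ℕ) (a : ZMod 2) : DihedralGroup (2 * m) →* Multiplicative (ZMod 2) where
  toFun
    | r i => .ofAdd (ZMod.castHom (dvd_mul_right 2 m) (ZMod 2) i)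
    | sr i => .ofAdd (ZMod.castHom (dvd_mul_right 2 m) (ZMod 2) i + a)
  map_one' := congrArg Multiplicative.ofAdd (map_zero _)
  map_mul' := by
    rintro (i | i) (j | j)
    · simp [← ofAdd_add]
    · simp [← ofAdd_add, CharTwo.sub_eq_add, add_left_comm, add_comm]
    · simp [← ofAdd_add, add_right_comm]
    · simp [← ofAdd_add, CharTwo.sub_eq_add, add_add_add_comm, CharTwo.add_self_eq_zero, add_comm]

@[simp]
lemma dihedralParity_sr (m : ℕ) (a : ZMod 2) (i : ZMod (2 * m)) :
    dihedralParity m a (sr i) = .ofAdd (ZMod.castHom (dvd_mul_right 2 m) (ZMod 2) i + a) := rfl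

theorem groupHomology_dihedral_general (k : Type) [CommRing k] [CharP k 2] (m : ℕ) [NeZero m]
    (n : ℕ) : Module.finrank k (GroupHomology k (DihedralGroup (2 * m)) n) = n + 1 :=
  finrank_groupHomology_of_closure_involutions_eq_top (sr_mul_self 0) (sr_mul_self 1)
    (closure_sr_zero_sr_one (2 * m)) (H := (dihedralParity m 1).ker) (K := (dihedralParity m 0).ker)
    (index_ker_eq_two (g := sr 0) (by simp)) (index_ker_eq_two (g := sr 1) (by simp))
    (by simp [MonoidHom.mem_ker]) (by simp [MonoidHom.mem_ker])
    (by rw [MonoidHom.mem_ker, dihedralParity_sr, map_one]; rfl) (by simp [MonoidHom.mem_ker]) n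

end Dihedral

/-- The group homology of the dihedral group of order 8 with trivial coefficients `F₂` is an
`F₂`-vector space of dimension `n + 1` in degree `n`. -/
theorem groupHomology_dihedral (n : ℕ) :
    Module.finrank (ZMod 2) (GroupHomology (ZMod 2) (DihedralGroup 4) n) = n + 1 :=
  groupHomology_dihedral_general (ZMod 2) 2 n
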